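/- Any two vertex preorders lying in a common facet F of C(m,n) are connected by a sequence of edges all of whose preorders lie in F: if F is a good rectangular preorder with two equivalence classes C₁ < C₂, and v, w are vertex preorders refining F (meaning x <_v y and x <_w y for all x ∈ C₁, y ∈ C₂), then there is an edge path from v to w through vertex preorders all refining F. -/

import Mathlib

/-- `Coll m n` is the set of collisions: vertical collisions `mᵢ` for `1 ≤ i < m`
(encoded `Sum.inl`) and horizontal collisions `lⱼ` for `1 ≤ j < n` (encoded `Sum.inr`). -/
abbrev Coll (m n : ℕ) := Fin (m - 1) ⊕ Fin (n - 1)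

/-- A vertical and a horizontal collision are orthogonal. -/
def Orthogonal {m n : ℕ} : Coll m n → Coll m n → Prop
  | Sum.inl _, Sum.inr _ => True
  | Sum.inr _, Sum.inl _ => True
  | _, _ => False

/-- Two distinct collisions of the same kind are parallel. -/
def Parallel {m n : ℕ} : Coll m n → Coll m n → Prop
  | Sum.inl i, Sum.inl j => i ≠ j
  | Sum.inr i, Sum.inr j => i ≠ j
  | _, _ => False

/-- `Between x y g`: `g` is a collision parallel to `x` and `y` whose index lies in the
interval spanned by the indices of `x` and `y`. -/
def Between {m n : ℕ} : Coll m n → Coll m n → Coll m n → Prop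
  | Sum.inl i, Sum.inl j, Sum.inl s => min i j ≤ s ∧ s ≤ max i j
  | Sum.inr i, Sum.inr j, Sum.inr s => min i j ≤ s ∧ s ≤ max i j
  | _, _, _ => False

/-- Strict comparison in a preorder `R`. -/
def StrictR {m n : ℕ} (R : Coll m n → Coll m n → Prop) (x y : Coll m n) : Prop :=
  R x y ∧ ¬ R y x

/-- `z` is an orthogonal link between the parallel collisions `x` and `y`:
`z` is orthogonal to them and `x ≤ z ≤ y` or `y ≤ z ≤ x`. -/
def IsLink {m n : ℕ} (R : Coll m n → Coll m n → Prop) (x y z : Coll m n) : Prop :=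
  Orthogonal x z ∧ ((R x z ∧ R z y) ∨ (R y z ∧ R z x))

/-- `g` is a gap between the parallel collisions `x` and `y`: its index is between theirs
and `x < g > y` strictly. -/
def IsGap {m n : ℕ} (R : Coll m n → Coll m n → Prop) (x y g : Coll m n) : Prop :=
  Between x y g ∧ StrictR R x g ∧ StrictR R y g

/-- A good rectangular preorder on `Coll m n`: a reflexive transitive relation such that
orthogonal collisions are always comparable, and parallel collisions are comparable iff
there is an orthogonal link between them or there is no gap between them. -/
structure IsGoodRect {m n : ℕ} (R : Coll m n → Coll m n → Prop) : Prop where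
  refl : ∀ x, R x x
  trans : ∀ x y z, R x y → R y z → R x z
  orth : ∀ x y, Orthogonal x y → R x y ∨ R y x
  par : ∀ x y, Parallel x y →
    ((R x y ∨ R y x) ↔ ((∃ z, IsLink R x y z) ∨ ¬ ∃ g, IsGap R x y g))

/-- `P` refines `Q`: every comparison of `P` holds in `Q`. -/
def Refines {m n : ℕ} (P Q : Coll m n → Coll m n → Prop) : Prop :=
  ∀ x y, P x y → Q x y

/-- A vertex preorder: a good rectangular preorder in which equivalence implies equality. -/
def IsVertexP {m n : ℕ} (R : Coll m n → Coll m n → Prop) : Prop :=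
  IsGoodRect R ∧ ∀ x y, R x y → R y x → x = y

/-- An edge preorder: a good rectangular preorder with exactly one equivalence class of
size two (the pair `{a,b}`), all other classes being singletons. -/
def IsEdgeP {m n : ℕ} (R : Coll m n → Coll m n → Prop) : Prop :=
  IsGoodRect R ∧ ∃ a b : Coll m n, a ≠ b ∧ R a b ∧ R b a ∧
    ∀ x y : Coll m n, x ≠ y → R x y → R y x → (x = a ∧ y = b) ∨ (x = b ∧ y = a)

/-- Adjacency of vertex preorders within the facet `F`: both vertices refine `F` and some
edge preorder refining `F` is refined by both. -/
def AdjVFacet {m n : ℕ} (F v w : Coll m n → Coll m n → Prop) : Prop :=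
  IsVertexP v ∧ IsVertexP w ∧ Refines v F ∧ Refines w F ∧
    ∃ E : Coll m n → Coll m n → Prop,
      IsEdgeP E ∧ Refines v E ∧ Refines w E ∧ Refines E F

section Helpers

variable {m n : ℕ}

lemma between_left {x y g h : Coll m n} (h1 : Between x y g) (h2 : Between x g h) :
    Between x y h := by
  rcases x with x | x <;> rcases y with y | y <;> rcases g with g | g <;>
    rcases h with h | h <;> simp only [Between] at * <;> grind

lemma between_symm {x y g : Coll m n} (h1 : Between x y g) : Between y x g := by
  rcases x with x | x <;> rcases y with y | y <;> rcases g with g | g <;>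
    simp only [Between] at * <;> grind

lemma between_split {x y z g : Coll m n} (h1 : Between x z g) (h2 : ¬ Orthogonal x y) :
    Between x y g ∨ Between y z g := by
  rcases x with x | x <;> rcases y with y | y <;> rcases g with g | g <;>
    rcases z with z | z <;> simp only [Between, Orthogonal] at * <;> grind

lemma between_self {x g : Coll m n} (h1 : Between x x g) : g = x := by
  rcases x with x | x <;> rcases g with g | g <;> simp only [Between] at * <;> grind

lemma between_not_orth {x y g : Coll m n} (h1 : Between x y g) : ¬ Orthogonal x y := by
  rcases x with x | x <;> rcases y with y | y <;> rcases g with g | g <;>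
    simp [Between, Orthogonal] at *

lemma between_not_orth' {x y g : Coll m n} (h1 : Between x y g) : ¬ Orthogonal x g := by
  rcases x with x | x <;> rcases y with y | y <;> rcases g with g | g <;>
    simp [Between, Orthogonal] at *

lemma orth_symm {x y : Coll m n} (h : Orthogonal x y) : Orthogonal y x := by
  rcases x with x | x <;> rcases y with y | y <;> simp [Orthogonal] at *

lemma orth_congr {x y z : Coll m n} (h : ¬ Orthogonal x y) (h2 : Orthogonal x z) :
    Orthogonal y z := by
  rcases x with x | x <;> rcases y with y | y <;> rcases z with z | z <;>
    simp [Orthogonal] at *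

lemma orth_irrefl (x : Coll m n) : ¬ Orthogonal x x := by
  rcases x with x | x <;> simp [Orthogonal]

lemma parallel_iff (x y : Coll m n) : Parallel x y ↔ ¬ Orthogonal x y ∧ x ≠ y := by
  rcases x with x | x <;> rcases y with y | y <;> simp [Orthogonal, Parallel]

/-- Total preorders. -/
structure TotPre (W : Coll m n → Coll m n → Prop) : Prop where
  trans : ∀ x y z, W x y → W y z → W x z
  total : ∀ x y, W x y ∨ W y x

/-- The comparability criterion of a good rectangular preorder. -/
def Cmp (W : Coll m n → Coll m n → Prop) (x y : Coll m n) : Prop :=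
  (∃ z, IsLink W x y z) ∨ ¬ ∃ g, IsGap W x y g

/-- The good rectangular preorder attached to a total preorder. -/
def Phi (W : Coll m n → Coll m n → Prop) (x y : Coll m n) : Prop :=
  W x y ∧ Cmp W x y

lemma cmp_of_orth {W : Coll m n → Coll m n → Prop} {x y : Coll m n} (h : Orthogonal x y) :
    Cmp W x y := by
  right
  rintro ⟨g, hg, -⟩
  exact between_not_orth hg h

lemma cmp_self {W : Coll m n → Coll m n → Prop} (x : Coll m n) : Cmp W x x := by
  right
  rintro ⟨g, hg, h, -⟩
  rw [between_self hg] at h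
  exact h.2 h.1

lemma cmp_symm {W : Coll m n → Coll m n → Prop} {x y : Coll m n} (h : Cmp W x y) :
    Cmp W y x := by
  by_cases ho : Orthogonal x y
  · exact cmp_of_orth (orth_symm ho)
  rcases h with ⟨z, hz, h⟩ | h
  · exact Or.inl ⟨z, orth_congr ho hz, h.symm⟩
  · right
    rintro ⟨g, hg, h1, h2⟩
    exact h ⟨g, between_symm hg, h2, h1⟩

lemma phi_orth {W : Coll m n → Coll m n → Prop} {x y : Coll m n} (h : Orthogonal x y) :
    Phi W x y ↔ W x y := ⟨fun h => h.1, fun h' => ⟨h', cmp_of_orth h⟩⟩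

lemma phi_trans {W : Coll m n → Coll m n → Prop} (hW : TotPre W) {x y z : Coll m n}
    (h1 : Phi W x y) (h2 : Phi W y z) : Phi W x z := by
  obtain ⟨hxy, c1⟩ := h1
  obtain ⟨hyz, c2⟩ := h2
  have hxz := hW.trans _ _ _ hxy hyz
  refine ⟨hxz, ?_⟩
  by_cases hoxy : Orthogonal x y
  · exact Or.inl ⟨y, hoxy, Or.inl ⟨hxy, hyz⟩⟩
  by_contra hc
  simp only [Cmp, not_or, not_not] at hc
  obtain ⟨hl, g, hg, hxg, hzg⟩ := hc
  have hyg : StrictR W y g :=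
    ⟨hW.trans _ _ _ hyz hzg.1, fun h => hzg.2 (hW.trans _ _ _ h hyz)⟩
  rcases between_split hg hoxy with hb | hb
  · rcases c1 with ⟨w, ho, ⟨ha, hb⟩ | ⟨ha, hb⟩⟩ | h
    · exact hl ⟨w, ho, Or.inl ⟨ha, hW.trans _ _ _ hb hyz⟩⟩
    · exact hl ⟨w, ho, Or.inl ⟨hW.trans _ _ _ hxy ha, hW.trans _ _ _ hb hxz⟩⟩
    · exact h ⟨g, hb, hxg, hyg⟩
  · rcases c2 with ⟨w, ho, h⟩ | h
    · have ho' : Orthogonal x w := orth_congr (fun h => hoxy (orth_symm h)) ho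
      rcases h with ⟨ha, hb⟩ | ⟨ha, hb⟩
      · exact hl ⟨w, ho', Or.inl ⟨hW.trans _ _ _ hxy ha, hb⟩⟩
      · exact hl ⟨w, ho', Or.inl ⟨hW.trans _ _ _ hxz ha, hW.trans _ _ _ hb hyz⟩⟩
    · exact h ⟨g, hb, hyg, hzg⟩

lemma strict_trans {W : Coll m n → Coll m n → Prop} (hW : TotPre W) {x y z : Coll m n}
    (h1 : StrictR W x y) (h2 : StrictR W y z) : StrictR W x z :=
  ⟨hW.trans _ _ _ h1.1 h2.1, fun h => h1.2 (hW.trans _ _ _ h2.1 h)⟩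

lemma strict_wf {W : Coll m n → Coll m n → Prop} (hW : TotPre W) :
    WellFounded (fun x y => StrictR W y x) := by
  haveI : IsTrans (Coll m n) (fun x y => StrictR W y x) :=
    ⟨fun a b c h1 h2 => strict_trans hW h2 h1⟩
  haveI : Std.Irrefl (fun x y : Coll m n => StrictR W y x) := ⟨fun a h => h.2 h.1⟩
  exact Finite.wellFounded_of_trans_of_irrefl _

/-- If there is a gap then there is a maximal one. -/
lemma exists_max_gap {W : Coll m n → Coll m n → Prop} (hW : TotPre W) {x y : Coll m n}
    (h : ∃ g, IsGap W x y g) :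
    ∃ g, IsGap W x y g ∧ ∀ h, Between x y h → ¬ StrictR W g h := by
  obtain ⟨g, hg, hmin⟩ := (strict_wf hW).has_min {g | IsGap W x y g} h
  refine ⟨g, hg, fun h hb hs => hmin h ⟨hb, ?_, ?_⟩ hs⟩
  · exact strict_trans hW hg.2.1 hs
  · exact strict_trans hW hg.2.2 hs

lemma phi_good {W : Coll m n → Coll m n → Prop} (hW : TotPre W) : IsGoodRect (Phi W) := by
  have hstr : ∀ x y, StrictR (Phi W) x y → StrictR W x y := fun x y h =>
    ⟨h.1.1, fun h' => h.2 ⟨h', cmp_symm h.1.2⟩⟩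
  have hstr' : ∀ x y, StrictR W x y → Cmp W x y → StrictR (Phi W) x y := fun x y h c =>
    ⟨⟨h.1, c⟩, fun h' => h.2 h'.1⟩
  refine ⟨fun x => ⟨(hW.total x x).elim id id, cmp_self x⟩,
    fun x y z => phi_trans hW, fun x y h => ?_, fun x y h => ?_⟩
  · exact (hW.total x y).imp (fun h' => (phi_orth h).2 h') (fun h' => (phi_orth (orth_symm h)).2 h')
  · have hno := ((parallel_iff x y).1 h).1
    have e1 : (Phi W x y ∨ Phi W y x) ↔ Cmp W x y := by
      constructor
      · rintro (h | h)
        · exact h.2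
        · exact cmp_symm h.2
      · intro h
        exact (hW.total x y).imp (fun h' => ⟨h', h⟩) (fun h' => ⟨h', cmp_symm h⟩)
    have e2 : (∃ z, IsLink (Phi W) x y z) ↔ ∃ z, IsLink W x y z := by
      refine exists_congr fun z => and_congr_right fun ho => ?_
      have ho' := orth_congr hno ho
      rw [phi_orth ho, phi_orth ho', phi_orth (orth_symm ho), phi_orth (orth_symm ho')]
    have e3 : (∃ g, IsGap (Phi W) x y g) ↔ ∃ g, IsGap W x y g := by
      constructor
      · rintro ⟨g, hb, h1, h2⟩
        exact ⟨g, hb, hstr _ _ h1, hstr _ _ h2⟩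
      · intro hg
        obtain ⟨g, ⟨hb, h1, h2⟩, hmax⟩ := exists_max_gap hW hg
        refine ⟨g, hb, hstr' _ _ h1 (Or.inr ?_), hstr' _ _ h2 (Or.inr ?_)⟩
        · rintro ⟨k, hk, -, hs⟩
          exact hmax k (between_left hb hk) hs
        · rintro ⟨k, hk, -, hs⟩
          exact hmax k (between_symm (between_left (between_symm hb) hk)) hs
    rw [e1, e2, e3, Cmp]

/-- Monotonicity of `Phi`. -/
lemma phi_mono {L W : Coll m n → Coll m n → Prop} (hL : TotPre L)
    (h : ∀ x y, L x y → W x y) : Refines (Phi L) (Phi W) := by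
  have hs : ∀ x y, StrictR W x y → StrictR L x y := fun x y hw =>
    have hn : ¬ L y x := fun h' => hw.2 (h _ _ h')
    ⟨(hL.total x y).resolve_right hn, hn⟩
  rintro x y ⟨h1, c⟩
  refine ⟨h _ _ h1, ?_⟩
  rcases c with ⟨z, ho, hz⟩ | hg
  · exact Or.inl ⟨z, ho, hz.imp (fun a => ⟨h _ _ a.1, h _ _ a.2⟩) (fun a => ⟨h _ _ a.1, h _ _ a.2⟩)⟩
  · exact Or.inr fun ⟨g, hb, h1, h2⟩ => hg ⟨g, hb, hs _ _ h1, hs _ _ h2⟩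

/-- Any linear extension of a vertex recovers that vertex. -/
lemma phi_ext {L v : Coll m n → Coll m n → Prop} (hL : TotPre L)
    (ha : ∀ x y, L x y → L y x → x = y) (hv : IsVertexP v) (h : ∀ x y, v x y → L x y) :
    Phi L = v := by
  obtain ⟨hv, hva⟩ := hv
  have hdir : ∀ x y, L x y → (v x y ∨ v y x) → v x y := by
    rintro x y hl (h1 | h1)
    · exact h1
    · rw [ha x y hl (h _ _ h1)]
      exact hv.refl _
  have hs : ∀ x y, StrictR v x y → StrictR L x y := fun x y hw =>
    ⟨h _ _ hw.1, fun h' => hw.2 (by rw [ha x y (h _ _ hw.1) h']; exact hv.refl _)⟩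
  have hcomp : ∀ x y, ¬ Orthogonal x y → ((v x y ∨ v y x) ↔ Cmp v x y) := by
    intro x y ho
    by_cases hxy : x = y
    · subst hxy
      exact iff_of_true (Or.inl (hv.refl _)) (cmp_self x)
    · exact hv.par x y ((parallel_iff x y).2 ⟨ho, hxy⟩)
  funext x y
  apply propext
  constructor
  · rintro ⟨hl, c⟩
    by_cases ho : Orthogonal x y
    · exact hdir _ _ hl (hv.orth _ _ ho)
    rcases c with ⟨z, hz, hlk⟩ | hg
    · have hz' := orth_congr ho hz
      rcases hlk with ⟨h1, h2⟩ | ⟨h1, h2⟩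
      · exact hv.trans _ z _ (hdir _ _ h1 (hv.orth _ _ hz))
          (hdir _ _ h2 (hv.orth _ _ (orth_symm hz')))
      · have := ha x y hl (hL.trans _ _ _ h1 h2)
        subst this
        exact hv.refl _
    · refine hdir _ _ hl ((hcomp x y ho).2 (Or.inr ?_))
      rintro ⟨g, hb, h1, h2⟩
      exact hg ⟨g, hb, hs _ _ h1, hs _ _ h2⟩
  · intro hxy
    refine ⟨h _ _ hxy, ?_⟩
    by_contra hc
    simp only [Cmp, not_or, not_not] at hc
    obtain ⟨hl, hg⟩ := hc
    obtain ⟨g, ⟨hb, h1, h2⟩, hmax⟩ := exists_max_gap hL hg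
    have hno := between_not_orth hb
    have c1 : v x g := by
      refine hdir _ _ h1.1 ((hcomp x g (between_not_orth' hb)).2 (Or.inr ?_))
      rintro ⟨k, hk, -, hk2⟩
      exact hmax k (between_left hb hk) (hs _ _ hk2)
    have c2 : v y g := by
      refine hdir _ _ h2.1 ((hcomp y g (between_not_orth' (between_symm hb))).2 (Or.inr ?_))
      rintro ⟨k, hk, -, hk2⟩
      exact hmax k (between_symm (between_left (between_symm hb) hk)) (hs _ _ hk2)
    rcases (hcomp x y hno).1 (Or.inl hxy) with ⟨z, ho, hz⟩ | hng
    · exact hl ⟨z, ho, hz.imp (fun a => ⟨h _ _ a.1, h _ _ a.2⟩) (fun a => ⟨h _ _ a.1, h _ _ a.2⟩)⟩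
    · exact hng ⟨g, hb, ⟨c1, fun h' => h1.2 (h _ _ h')⟩, ⟨c2, fun h' => h2.2 (h _ _ h')⟩⟩

/-- Linear orders, as relations. -/
structure LinR (L : Coll m n → Coll m n → Prop) : Prop extends TotPre L where
  anti : ∀ x y, L x y → L y x → x = y

lemma LinR.vertex {L : Coll m n → Coll m n → Prop} (hL : LinR L) : IsVertexP (Phi L) :=
  ⟨phi_good hL.toTotPre, fun x y h1 h2 => hL.anti x y h1.1 h2.1⟩

/-- Adding the reversed pair `(b, a)`. -/
def Tie (L : Coll m n → Coll m n → Prop) (a b x y : Coll m n) : Prop :=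
  L x y ∨ (x = b ∧ y = a)

/-- Swapping the pair `(a, b)`. -/
def Swp (L : Coll m n → Coll m n → Prop) (a b x y : Coll m n) : Prop :=
  (L x y ∧ ¬ (x = a ∧ y = b)) ∨ (x = b ∧ y = a)

lemma tie_tot {L : Coll m n → Coll m n → Prop} (hL : LinR L) {a b : Coll m n}
    (hadj : ∀ z, L a z → L z b → z = a ∨ z = b) : TotPre (Tie L a b) := by
  have ht := hL.trans
  have htot := hL.total
  refine ⟨fun x y z => ?_, fun x y => ?_⟩
  · rintro (h1 | ⟨rfl, rfl⟩) (h2 | ⟨h3, h4⟩)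
    · exact Or.inl (ht _ _ _ h1 h2)
    · subst h3 h4
      rcases htot x z with h | h
      · exact Or.inl h
      · rcases hadj x h h1 with rfl | rfl
        · exact Or.inl h
        · exact Or.inr ⟨rfl, rfl⟩
    · rcases htot x z with h | h
      · exact Or.inl h
      · rcases hadj z h2 h with rfl | rfl
        · exact Or.inr ⟨rfl, rfl⟩
        · exact Or.inl h
    · exact Or.inr ⟨rfl, h4⟩
  · exact (htot x y).imp Or.inl Or.inl

lemma swp_lin {L : Coll m n → Coll m n → Prop} (hL : LinR L) {a b : Coll m n} (hab : a ≠ b)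
    (hl : L a b)
    (hadj : ∀ z, L a z → L z b → z = a ∨ z = b) : LinR (Swp L a b) := by
  have ht := hL.trans
  have htot := hL.total
  have ha := hL.anti
  refine ⟨⟨fun x y z => ?_, fun x y => ?_⟩, fun x y => ?_⟩
  · unfold Swp
    grind
  · unfold Swp
    grind
  · unfold Swp
    grind

/-- If `a` and `b` are not comparable after tying, then swapping changes nothing. -/
lemma phi_tie_eq {L : Coll m n → Coll m n → Prop} (hL : LinR L) {a b : Coll m n} (hab : a ≠ b)
    (hl : L a b) (hadj : ∀ z, L a z → L z b → z = a ∨ z = b)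
    (hc : ¬ Cmp (Tie L a b) a b) : Phi L = Phi (Tie L a b) := by
  have hW := tie_tot hL hadj
  have hv : IsVertexP (Phi (Tie L a b)) := by
    refine ⟨phi_good hW, ?_⟩
    rintro x y ⟨h1, c1⟩ ⟨h2, c2⟩
    rcases h1 with h1 | ⟨rfl, rfl⟩
    · rcases h2 with h2 | ⟨rfl, rfl⟩
      · exact hL.anti _ _ h1 h2
      · exact absurd c1 hc
    · exact absurd c2 hc
  refine phi_ext hL.toTotPre hL.anti hv ?_
  rintro x y ⟨h1 | ⟨rfl, rfl⟩, c⟩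
  · exact h1
  · exact absurd (cmp_symm c) hc

lemma tie_eq_swp {L : Coll m n → Coll m n → Prop} {a b : Coll m n} (hab : a ≠ b)
    (hl : L a b) : Tie L a b = Tie (Swp L a b) b a := by
  funext x y
  apply propext
  unfold Tie Swp
  grind

lemma step {F L : Coll m n → Coll m n → Prop} (hL : LinR L) {a b : Coll m n} (hab : a ≠ b)
    (hl : L a b) (hadj : ∀ z, L a z → L z b → z = a ∨ z = b)
    (hLF : Refines L F) (hF : F b a) :
    Relation.ReflTransGen (AdjVFacet F) (Phi L) (Phi (Swp L a b)) := by
  have hS := swp_lin hL hab hl hadj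
  have hW := tie_tot hL hadj
  have hSF : Refines (Swp L a b) F := by
    rintro x y (⟨h, -⟩ | ⟨rfl, rfl⟩)
    · exact hLF _ _ h
    · exact hF
  by_cases hc : Cmp (Tie L a b) a b
  · refine Relation.ReflTransGen.single ⟨hL.vertex, hS.vertex, fun x y h => hLF _ _ h.1,
      fun x y h => hSF _ _ h.1, Phi (Tie L a b), ⟨phi_good hW, a, b, hab, ⟨Or.inl hl, hc⟩,
        ⟨Or.inr ⟨rfl, rfl⟩, cmp_symm hc⟩, ?_⟩, phi_mono hL.toTotPre fun x y h => Or.inl h,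
        phi_mono hS.toTotPre fun x y h => h.imp And.left id, ?_⟩
    · rintro x y hne ⟨h1, -⟩ ⟨h2, -⟩
      rcases h1 with h1 | h1
      · rcases h2 with h2 | h2
        · exact absurd (hL.anti _ _ h1 h2) hne
        · exact Or.inl ⟨h2.2, h2.1⟩
      · exact Or.inr h1
    · rintro x y ⟨h | ⟨rfl, rfl⟩, -⟩
      · exact hLF _ _ h
      · exact hF
  · have e1 := phi_tie_eq hL hab hl hadj hc
    have e2 : Phi (Swp L a b) = Phi (Tie (Swp L a b) b a) := by
      refine phi_tie_eq hS hab.symm (Or.inr ⟨rfl, rfl⟩) ?_ ?_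
      · intro z h1 h2
        have := hL.anti
        unfold Swp at h1 h2
        have ht := hL.trans
        grind
      · rw [← tie_eq_swp hab hl]
        exact fun h => hc (cmp_symm h)
    rw [← tie_eq_swp hab hl, ← e1] at e2
    rw [e2]

lemma exists_adj {L M : Coll m n → Coll m n → Prop} (hL : LinR L) (hM : LinR M)
    (h : ∃ x y, L x y ∧ ¬ M x y) :
    ∃ a b, L a b ∧ ¬ M a b ∧ ∀ z, L a z → L z b → z = a ∨ z = b := by
  classical
  obtain ⟨x, y, h1, h2⟩ := h
  induction hk : (Finset.univ.filter fun z => L x z ∧ L z y).card using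
    Nat.strong_induction_on generalizing x y with
  | _ k ih =>
    by_cases hz : ∀ z, L x z → L z y → z = x ∨ z = y
    · exact ⟨x, y, h1, h2, hz⟩
    push Not at hz
    obtain ⟨z, hxz, hzy, hne1, hne2⟩ := hz
    by_cases hm : M x z
    · have hm' : ¬ M z y := fun h => h2 (hM.trans _ _ _ hm h)
      refine ih _ ?_ z y hzy hm' rfl
      rw [← hk]
      apply Finset.card_lt_card
      rw [Finset.ssubset_iff_of_subset]
      · refine ⟨x, ?_, ?_⟩
        · simpa using ⟨(hL.total x x).elim id id, h1⟩
        · simp only [Finset.mem_filter, Finset.mem_univ, true_and, not_and]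
          exact fun h => absurd (hL.anti _ _ h hxz) hne1
      · intro t
        simp only [Finset.mem_filter, Finset.mem_univ, true_and]
        exact fun h => ⟨hL.trans _ _ _ hxz h.1, h.2⟩
    · refine ih _ ?_ x z hxz hm rfl
      rw [← hk]
      apply Finset.card_lt_card
      rw [Finset.ssubset_iff_of_subset]
      · refine ⟨y, ?_, ?_⟩
        · simpa using ⟨h1, (hL.total y y).elim id id⟩
        · simp only [Finset.mem_filter, Finset.mem_univ, true_and, not_and]
          exact fun _ h => absurd (hL.anti _ _ hzy h) hne2
      · intro t
        simp only [Finset.mem_filter, Finset.mem_univ, true_and]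
        exact fun h => ⟨h.1, hL.trans _ _ _ h.2 hzy⟩

lemma connect {F L M : Coll m n → Coll m n → Prop} (hL : LinR L) (hM : LinR M)
    (hLF : Refines L F) (hMF : Refines M F) :
    Relation.ReflTransGen (AdjVFacet F) (Phi L) (Phi M) := by
  classical
  induction hk : (Finset.univ.filter fun p : Coll m n × Coll m n =>
    L p.1 p.2 ∧ ¬ M p.1 p.2).card using Nat.strong_induction_on generalizing L with
  | _ k ih =>
    by_cases h : ∃ x y, L x y ∧ ¬ M x y
    · obtain ⟨a, b, h1, h2, hadj⟩ := exists_adj hL hM h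
      have hba : M b a := (hM.total a b).resolve_left h2
      have hab : a ≠ b := by
        rintro rfl
        exact h2 hba
      refine (step hL hab h1 hadj hLF (hMF _ _ hba)).trans ?_
      refine ih _ ?_ (swp_lin hL hab h1 hadj) ?_ rfl
      · rw [← hk]
        apply Finset.card_lt_card
        rw [Finset.ssubset_iff_of_subset]
        · refine ⟨(a, b), ?_, ?_⟩
          · simpa using ⟨h1, h2⟩
          · simp only [Finset.mem_filter, Finset.mem_univ, true_and, Swp]
            grind
        · intro t
          simp only [Finset.mem_filter, Finset.mem_univ, true_and, Swp]
          grind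
      · rintro x y (⟨h, -⟩ | ⟨rfl, rfl⟩)
        · exact hLF _ _ h
        · exact hMF _ _ hba
    · push Not at h
      have : L = M := by
        funext x y
        refine propext ⟨h x y, fun hm => ?_⟩
        rcases hL.total x y with hl | hl
        · exact hl
        · rw [hM.anti _ _ hm (h _ _ hl)]
          exact (hL.total y y).elim id id
      rw [this]

lemma exists_ext {F v : Coll m n → Coll m n → Prop} (hF : TotPre F) (hv : IsVertexP v)
    (hvF : Refines v F) : ∃ L, LinR L ∧ Refines L F ∧ Phi L = v := by
  haveI : IsPartialOrder (Coll m n) v :=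
    { refl := hv.1.refl, trans := hv.1.trans, antisymm := hv.2 }
  obtain ⟨s, hs, hvs⟩ := extend_partialOrder v
  have hst : ∀ x y z, s x y → s y z → s x z := hs.trans
  have hsa : ∀ x y, s x y → s y x → x = y := hs.antisymm
  have hstot : ∀ x y, s x y ∨ s y x := hs.total
  have hL : LinR fun x y => F x y ∧ (F y x → s x y) := by
    refine ⟨⟨?_, ?_⟩, ?_⟩
    · rintro x y z ⟨h1, h2⟩ ⟨h3, h4⟩
      exact ⟨hF.trans _ _ _ h1 h3, fun h => hst _ _ _ (h2 (hF.trans _ _ _ h3 h))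
        (h4 (hF.trans _ _ _ h h1))⟩
    · intro x y
      have := hF.total x y
      have := hstot x y
      tauto
    · rintro x y ⟨h1, h2⟩ ⟨h3, h4⟩
      exact hsa _ _ (h2 h3) (h4 h1)
  exact ⟨_, hL, fun x y h => h.1,
    phi_ext hL.toTotPre hL.anti hv fun x y h => ⟨hvF _ _ h, fun _ => hvs _ _ h⟩⟩

lemma facet_total (F : Coll m n → Coll m n → Prop) (hF : IsGoodRect F)
    (htwo : ∃ a b : Coll m n, ¬ (F a b ∧ F b a) ∧
      ∀ x : Coll m n, (F x a ∧ F a x) ∨ (F x b ∧ F b x)) : TotPre F := by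
  obtain ⟨a, b, hn, hx⟩ := htwo
  have ht := hF.trans
  have hab : F a b ∨ F b a := by
    by_cases ho : Orthogonal a b
    · exact hF.orth _ _ ho
    · refine (hF.par a b ((parallel_iff a b).2 ⟨ho, ?_⟩)).2 (Or.inr ?_)
      · rintro rfl
        exact hn ⟨hF.refl _, hF.refl _⟩
      · rintro ⟨g, -, h1, h2⟩
        rcases hx g with h | h
        · exact h1.2 h.1
        · exact h2.2 h.1
  refine ⟨ht, fun x y => ?_⟩
  rcases hx x with h1 | h1 <;> rcases hx y with h2 | h2
  · exact Or.inl (ht _ _ _ h1.1 h2.2)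
  · exact hab.imp (fun h => ht _ _ _ h1.1 (ht _ _ _ h h2.2))
      (fun h => ht _ _ _ h2.1 (ht _ _ _ h h1.2))
  · exact hab.symm.imp (fun h => ht _ _ _ h1.1 (ht _ _ _ h h2.2))
      (fun h => ht _ _ _ h2.1 (ht _ _ _ h h1.2))
  · exact Or.inl (ht _ _ _ h1.1 h2.2)

end Helpers

/-- Any two vertex preorders lying in a common facet `F` (a good rectangular preorder
with exactly two equivalence classes) are connected by a sequence of edges all of whose
preorders lie in `F`. -/
theorem vertices_edge_connected_in_facet {m n : ℕ}
    (F : Coll m n → Coll m n → Prop) (hF : IsGoodRect F)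
    (htwo : ∃ a b : Coll m n, ¬ (F a b ∧ F b a) ∧
      ∀ x : Coll m n, (F x a ∧ F a x) ∨ (F x b ∧ F b x))
    (v w : Coll m n → Coll m n → Prop)
    (hv : IsVertexP v) (hw : IsVertexP w)
    (hvF : Refines v F) (hwF : Refines w F) :
    Relation.ReflTransGen (AdjVFacet F) v w := by
  have hT := facet_total F hF htwo
  obtain ⟨L, hL, hLF, rfl⟩ := exists_ext hT hv hvF
  obtain ⟨M, hM, hMF, rfl⟩ := exists_ext hT hw hwF
  exact connect hL hM hLF hMF
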